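/- Let n ≥ 4, A the Cartan matrix of type D_n, and ι an admissible sequence adapted to A. Then the type D boxes satisfy: (1) B^D_s(j+1) = B^D_s(j) − β_{s+P(j),j} for 1 ≤ j ≤ n−1 and s ≥ 1 − P(j); (2) B^D_s(n̄) = B^D_s(n−1) − β_{s+P(n),n} for s ≥ 1 − P(n); (3) B^D_s(ovl(n−1)) = B^D_s(n) − β_{s+P(n),n} for s ≥ 1 − P(n); (4) B^D_s(ovl(j−1)) = B^D_s(j̄) − β_{s+P(j−1)+n−j, j−1} for 2 ≤ j ≤ n and s ≥ 1 + j − P(j−1) − n; (5) B^D_{l+2}(ovl(n+1)) + B^D_{l+1}(n̄) + B^D_l(ovl(n−1)) = B^D_l(ovl(n+1)) − β_{l+P(n), n} for l ≥ 1 − P(n). -/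

import Mathlib

noncomputable section

/-- The coordinate linear form `x_k` (as a coefficient vector). -/
def xc (k : ℕ) : ℕ → ℚ := fun l => if l = k then 1 else 0

/-- Cartan matrix of type `A_n`. -/
def cartanA (_n : ℕ) (i j : ℕ) : ℤ :=
  if i = j then 2 else if i + 1 = j ∨ j + 1 = i then -1 else 0

/-- Cartan matrix of type `B_n`. -/
def cartanB (n : ℕ) (i j : ℕ) : ℤ :=
  if i = j then 2
  else if i = n ∧ j = n - 1 then -2
  else if i + 1 = j ∨ j + 1 = i then -1 else 0

/-- Cartan matrix of type `C_n`. -/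
def cartanC (n : ℕ) (i j : ℕ) : ℤ :=
  if i = j then 2
  else if i = n - 1 ∧ j = n then -2
  else if i + 1 = j ∨ j + 1 = i then -1 else 0

/-- Cartan matrix of type `D_n`. -/
def cartanD (n : ℕ) (i j : ℕ) : ℤ :=
  if i = j then 2
  else if (i = n - 1 ∧ j = n) ∨ (i = n ∧ j = n - 1) then 0
  else if (i + 1 = j ∨ j + 1 = i) ∨ (i = n ∧ j = n - 2) ∨ (i = n - 2 ∧ j = n) then -1
  else 0

/-- `ι` (with positions indexed by `k ≥ 1`) takes values in `{1,…,n}`, has no two equal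
consecutive entries, and every index occurs infinitely often. -/
def Admissible (n : ℕ) (ι : ℕ → ℕ) : Prop :=
  (∀ k, 1 ≤ k → 1 ≤ ι k ∧ ι k ≤ n) ∧
  (∀ k, 1 ≤ k → ι k ≠ ι (k + 1)) ∧
  (∀ i, 1 ≤ i → i ≤ n → ∀ N, ∃ k, N ≤ k ∧ ι k = i)

/-- `k^+`: the next position after `k` carrying the same letter. -/
def kplus (ι : ℕ → ℕ) (k : ℕ) : ℕ := sInf {l | k < l ∧ ι l = ι k}

/-- `k^-`: the previous position (`≥ 1`) carrying the same letter, `0` if none. -/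
def kminus (ι : ℕ → ℕ) (k : ℕ) : ℕ := sSup {l | 0 < l ∧ l < k ∧ ι l = ι k}

/-- The linear form `β_k` (with `β_0 = 0`). -/
def beta (A : ℕ → ℕ → ℤ) (ι : ℕ → ℕ) (k : ℕ) : ℕ → ℚ :=
  if k = 0 then 0
  else xc k + (∑ j ∈ Finset.Ioo k (kplus ι k), (A (ι k) (ι j) : ℚ) • xc j) + xc (kplus ι k)

/-- The piecewise-linear operator `S_k`. -/
def Sop (A : ℕ → ℕ → ℤ) (ι : ℕ → ℕ) (k : ℕ) (φ : ℕ → ℚ) : ℕ → ℚ :=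
  if 0 < φ k then φ - φ k • beta A ι k
  else φ - φ k • beta A ι (kminus ι k)

/-- Membership in `Ξ_ι`: forms obtained from some `x_{j_0}` by finitely many operators `S_k`. -/
inductive XiMem (A : ℕ → ℕ → ℤ) (ι : ℕ → ℕ) : (ℕ → ℚ) → Prop
  | base (k : ℕ) (hk : 1 ≤ k) : XiMem A ι (xc k)
  | step (k : ℕ) (hk : 1 ≤ k) (φ : ℕ → ℚ) (h : XiMem A ι φ) : XiMem A ι (Sop A ι k φ)

/-- The set `Ξ_ι`. -/
def Xi (A : ℕ → ℕ → ℤ) (ι : ℕ → ℕ) : Set (ℕ → ℚ) := { φ | XiMem A ι φ }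

/-- Forms obtained from a set `g` of generators by finitely many operators `S_k`. -/
inductive XiMemFrom (A : ℕ → ℕ → ℤ) (ι : ℕ → ℕ) (g : Set (ℕ → ℚ)) : (ℕ → ℚ) → Prop
  | base (φ : ℕ → ℚ) (h : φ ∈ g) : XiMemFrom A ι g φ
  | step (k : ℕ) (hk : 1 ≤ k) (φ : ℕ → ℚ) (h : XiMemFrom A ι g φ) :
      XiMemFrom A ι g (Sop A ι k φ)

/-- `ι` is adapted to the Cartan matrix `A`: for `i ≠ j` with `a_{i,j} ≠ 0`, consecutive
members of the subsequence of `ι` consisting of the letters `i`, `j` are distinct. -/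
def Adapted (n : ℕ) (A : ℕ → ℕ → ℤ) (ι : ℕ → ℕ) : Prop :=
  ∀ i j, 1 ≤ i → i ≤ n → 1 ≤ j → j ≤ n → i ≠ j → A i j ≠ 0 →
    ∀ k l, 1 ≤ k → k < l → (ι k = i ∨ ι k = j) → (ι l = i ∨ ι l = j) →
      (∀ m, k < m → m < l → ι m ≠ i ∧ ι m ≠ j) → ι k ≠ ι l

/-- Position of the first occurrence of the letter `i` in `ι`. -/
def firstOcc (ι : ℕ → ℕ) (i : ℕ) : ℕ := sInf {k | 1 ≤ k ∧ ι k = i}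

/-- `p_{i,j} = 1` iff the first occurrence of `i` precedes the first occurrence of `j`. -/
def pval (ι : ℕ → ℕ) (i j : ℕ) : ℕ := if firstOcc ι i < firstOcc ι j then 1 else 0

/-- The function `P(k)` for types A, B, C (and `P(k) = 0` for `k > n`, `k ≤ 1`). -/
def PABC (ι : ℕ → ℕ) (n k : ℕ) : ℕ :=
  if k ≤ n then ∑ t ∈ Finset.Icc 2 k, pval ι t (t - 1) else 0

/-- The function `P(k)` for type D. -/
def PD (ι : ℕ → ℕ) (n k : ℕ) : ℕ :=
  if k = n then (∑ t ∈ Finset.Icc 2 (n - 2), pval ι t (t - 1)) + pval ι n (n - 2)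
  else if k ≤ n then ∑ t ∈ Finset.Icc 2 k, pval ι t (t - 1) else 0

/-- `occPos ι j s`: the position of the `s`-th occurrence of the letter `j` in `ι`
(`0` for `s = 0`). -/
def occPos (ι : ℕ → ℕ) (j : ℕ) : ℕ → ℕ
  | 0 => 0
  | s + 1 => sInf {k | occPos ι j s < k ∧ ι k = j}

/-- The double-indexed coordinate form `x_{s,j}`, with the conventions
`x_{s,0} = x_{s,n+1} = 0` and `x_{s,j} = 0` for `s ≤ 0`. -/
def xsj (ι : ℕ → ℕ) (n : ℕ) (s : ℤ) (j : ℕ) : ℕ → ℚ :=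
  if 1 ≤ s ∧ 1 ≤ j ∧ j ≤ n then xc (occPos ι j s.toNat) else 0

/-- The double-indexed form `β_{s,j}`. -/
def betasj (A : ℕ → ℕ → ℤ) (ι : ℕ → ℕ) (s : ℤ) (j : ℕ) : ℕ → ℚ :=
  beta A ι (occPos ι j s.toNat)

/-- The double-indexed operator `S_{m,j}`. -/
def Ssj (A : ℕ → ℕ → ℤ) (ι : ℕ → ℕ) (m j : ℕ) (φ : ℕ → ℚ) : ℕ → ℚ :=
  Sop A ι (occPos ι j m) φ

/- Entries of the ordered sets `J_X` are encoded as natural numbers: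
an unbarred entry `j ∈ {1,…,n}` is encoded as `j`, a barred entry `j̄` is
encoded as `2n+1-j` (so that `n̄ = n+1, …, 1̄ = 2n` and the total order of
`J_B = J_C` is the numerical order), and the extra symbol `ovl(n+1)` of
types C and D is encoded as `0`. -/

/-- The box of type A. -/
def boxA (ι : ℕ → ℕ) (n : ℕ) (s : ℤ) (j : ℕ) : ℕ → ℚ :=
  xsj ι n (s + (PABC ι n j : ℤ)) j - xsj ι n (s + (PABC ι n (j - 1) : ℤ) + 1) (j - 1)

/-- The box of type B. -/
def boxB (ι : ℕ → ℕ) (n : ℕ) (s : ℤ) (e : ℕ) : ℕ → ℚ :=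
  if e ≤ n then
    xsj ι n (s + (PABC ι n e : ℤ)) e - xsj ι n (s + (PABC ι n (e - 1) : ℤ) + 1) (e - 1)
  else
    xsj ι n (s + (PABC ι n (2 * n - e) : ℤ) + (n : ℤ) - ((2 * n + 1 - e : ℕ) : ℤ) + 1)
        (2 * n - e)
      - xsj ι n (s + (PABC ι n (2 * n + 1 - e) : ℤ) + (n : ℤ) - ((2 * n + 1 - e : ℕ) : ℤ) + 1)
          (2 * n + 1 - e)

/-- The box of type C (`ovl(n+1)` encoded as `0`). -/
def boxC (ι : ℕ → ℕ) (n : ℕ) (s : ℤ) (e : ℕ) : ℕ → ℚ :=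
  if e = 0 then xsj ι n (s + (PABC ι n n : ℤ)) n
  else if e < n then
    xsj ι n (s + (PABC ι n e : ℤ)) e - xsj ι n (s + (PABC ι n (e - 1) : ℤ) + 1) (e - 1)
  else if e = n then
    (2 : ℚ) • xsj ι n (s + (PABC ι n n : ℤ)) n
      - xsj ι n (s + (PABC ι n (n - 1) : ℤ) + 1) (n - 1)
  else if e = n + 1 then
    xsj ι n (s + (PABC ι n (n - 1) : ℤ) + 1) (n - 1)
      - (2 : ℚ) • xsj ι n (s + (PABC ι n n : ℤ) + 1) n
  else
    xsj ι n (s + (PABC ι n (2 * n - e) : ℤ) + (n : ℤ) - ((2 * n + 1 - e : ℕ) : ℤ) + 1)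
        (2 * n - e)
      - xsj ι n (s + (PABC ι n (2 * n + 1 - e) : ℤ) + (n : ℤ) - ((2 * n + 1 - e : ℕ) : ℤ) + 1)
          (2 * n + 1 - e)

/-- The box of type D (`ovl(n+1)` encoded as `0`, `n̄` as `n+1`, `ovl(n-1)` as `n+2`). -/
def boxD (ι : ℕ → ℕ) (n : ℕ) (s : ℤ) (e : ℕ) : ℕ → ℚ :=
  if e = 0 then xsj ι n (s + (PD ι n n : ℤ)) n
  else if e ≤ n - 2 then
    xsj ι n (s + (PD ι n e : ℤ)) e - xsj ι n (s + (PD ι n (e - 1) : ℤ) + 1) (e - 1)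
  else if e = n - 1 then
    xsj ι n (s + (PD ι n (n - 1) : ℤ)) (n - 1) + xsj ι n (s + (PD ι n n : ℤ)) n
      - xsj ι n (s + (PD ι n (n - 2) : ℤ) + 1) (n - 2)
  else if e = n then
    xsj ι n (s + (PD ι n n : ℤ)) n - xsj ι n (s + (PD ι n (n - 1) : ℤ) + 1) (n - 1)
  else if e = n + 1 then
    xsj ι n (s + (PD ι n (n - 1) : ℤ)) (n - 1) - xsj ι n (s + (PD ι n n : ℤ) + 1) n
  else if e = n + 2 then
    xsj ι n (s + (PD ι n (n - 2) : ℤ) + 1) (n - 2)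
      - xsj ι n (s + (PD ι n (n - 1) : ℤ) + 1) (n - 1)
      - xsj ι n (s + (PD ι n n : ℤ) + 1) n
  else
    xsj ι n (s + (PD ι n (2 * n - e) : ℤ) + (n : ℤ) - ((2 * n + 1 - e : ℕ) : ℤ)) (2 * n - e)
      - xsj ι n (s + (PD ι n (2 * n + 1 - e) : ℤ) + (n : ℤ) - ((2 * n + 1 - e : ℕ) : ℤ))
          (2 * n + 1 - e)

/-- The column tableau `[j_1,…,j_k]_s = Σ_{i=1}^k box_{s+k-i}(j_i)`. -/
def tab (box : ℤ → ℕ → ℕ → ℚ) (s : ℤ) (k : ℕ) (j : ℕ → ℕ) : ℕ → ℚ :=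
  ∑ i ∈ Finset.Icc 1 k, box (s + (k : ℤ) - (i : ℤ)) (j i)

/-- The set `Tab_{A,ι}`. -/
def TabA (ι : ℕ → ℕ) (n : ℕ) : Set (ℕ → ℚ) :=
  { T | ∃ (k : ℕ) (s : ℤ) (j : ℕ → ℕ),
      1 ≤ k ∧ k ≤ n ∧
      (∀ i, 1 ≤ i → i ≤ k → 1 ≤ j i ∧ j i ≤ n + 1) ∧
      (∀ i, 1 ≤ i → i < k → j i < j (i + 1)) ∧
      1 - (PABC ι n k : ℤ) ≤ s ∧
      T = tab (boxA ι n) s k j }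

/-- `|·|` on encoded entries of `J_B = J_C`. -/
def absJ (n e : ℕ) : ℕ := if e ≤ n then e else 2 * n + 1 - e

/-- The set `Tab_{B,ι}`. -/
def TabB (ι : ℕ → ℕ) (n : ℕ) : Set (ℕ → ℚ) :=
  { T | ∃ (k : ℕ) (s : ℤ) (j : ℕ → ℕ),
      1 ≤ k ∧ k ≤ n ∧
      (∀ i, 1 ≤ i → i ≤ k → 1 ≤ j i ∧ j i ≤ 2 * n) ∧
      (∀ i, 1 ≤ i → i < k → j i < j (i + 1)) ∧
      (k = n → ∀ l m, 1 ≤ l → l < m → m ≤ k → absJ n (j l) ≠ absJ n (j m)) ∧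
      1 - (PABC ι n k : ℤ) ≤ s ∧
      T = tab (boxB ι n) s k j }

/-- Defining conditions of `Tab_{C,ι}` on the data `(k,s,j)`. -/
def TabCcond (ι : ℕ → ℕ) (n : ℕ) (k : ℕ) (s : ℤ) (j : ℕ → ℕ) : Prop :=
  (1 ≤ k ∧ k ≤ n - 1 ∧
    (∀ i, 1 ≤ i → i ≤ k → 1 ≤ j i ∧ j i ≤ 2 * n) ∧
    (∀ i, 1 ≤ i → i < k → j i < j (i + 1)) ∧
    1 - (PABC ι n k : ℤ) ≤ s)
  ∨
  (j 1 = 0 ∧ 1 ≤ k ∧ k ≤ n + 1 ∧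
    (∀ i, 2 ≤ i → i ≤ k → n + 1 ≤ j i ∧ j i ≤ 2 * n) ∧
    (∀ i, 2 ≤ i → i < k → j i < j (i + 1)) ∧
    1 - (PABC ι n n : ℤ) ≤ s)

/-- The set `Tab_{C,ι}`. -/
def TabC (ι : ℕ → ℕ) (n : ℕ) : Set (ℕ → ℚ) :=
  { T | ∃ k s j, TabCcond ι n k s j ∧ T = tab (boxC ι n) s k j }

/-- The partial order on (encoded) `J_D`: `a ≤ b` iff `a = b`, or `a < b` numerically and
`(a,b)` is not the incomparable pair `(n, n̄)`. -/
def leD (n a b : ℕ) : Prop := a = b ∨ (a < b ∧ ¬(a = n ∧ b = n + 1))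

/-- Defining conditions of `Tab_{D,ι}` on the data `(k,s,j)`. -/
def TabDcond (ι : ℕ → ℕ) (n : ℕ) (k : ℕ) (s : ℤ) (j : ℕ → ℕ) : Prop :=
  (1 ≤ k ∧ k ≤ n - 2 ∧
    (∀ i, 1 ≤ i → i ≤ k → 1 ≤ j i ∧ j i ≤ 2 * n) ∧
    (∀ i, 1 ≤ i → i < k → ¬ leD n (j (i + 1)) (j i)) ∧
    1 - (PD ι n k : ℤ) ≤ s)
  ∨
  (j 1 = 0 ∧ 1 ≤ k ∧ k ≤ n + 1 ∧
    (∀ i, 2 ≤ i → i ≤ k → n + 1 ≤ j i ∧ j i ≤ 2 * n) ∧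
    (∀ i, 2 ≤ i → i < k → j i < j (i + 1)) ∧
    (k % 2 = 0 → 1 - (PD ι n (n - 1) : ℤ) ≤ s) ∧
    (k % 2 = 1 → 1 - (PD ι n n : ℤ) ≤ s))

/-- The set `Tab_{D,ι}`. -/
def TabD (ι : ℕ → ℕ) (n : ℕ) : Set (ℕ → ℚ) :=
  { T | ∃ k s j, TabDcond ι n k s j ∧ T = tab (boxD ι n) s k j }

end

/-!
Root the Dynkin diagram `D_n` at the node `1`. Since consecutive occurrences of a letter `i` enclose
exactly one occurrence of each adjacent letter `j`, the form `β_{m,i}` is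
`x_{m,i} + x_{m+1,i} - Σ_j x_{m+p_{j,i},j}`. The shift `P` satisfies `P(j) = P(i) + p_{j,i}` for
every child `j` of `i`, so in the coordinates `X_s(j) = x_{s+P(j),j}` all dependence on the order of
the first occurrences disappears: `β_{s+P(i),i}` is `X_s(i) + X_{s+1}(i)` minus `X_{s+1}` at the
parent of `i` and minus `X_s` at the children of `i`. The box relations are then linear identities.
-/

section Occurrences

variable {ι : ℕ → ℕ} {i j k s : ℕ}

theorem occPos_lt_succ_and_apply (hi : ∃ᶠ k in Filter.atTop, ι k = i) (s : ℕ) :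
    occPos ι i s < occPos ι i (s + 1) ∧ ι (occPos ι i (s + 1)) = i :=
  Nat.sInf_mem (s := {k | occPos ι i s < k ∧ ι k = i}) (Filter.frequently_atTop'.1 hi _)

theorem occPos_lt_succ (hi : ∃ᶠ k in Filter.atTop, ι k = i) (s : ℕ) :
    occPos ι i s < occPos ι i (s + 1) :=
  (occPos_lt_succ_and_apply hi s).1

theorem apply_occPos_succ (hi : ∃ᶠ k in Filter.atTop, ι k = i) (s : ℕ) :
    ι (occPos ι i (s + 1)) = i :=
  (occPos_lt_succ_and_apply hi s).2

theorem occPos_succ_le (h : occPos ι i s < k) (hk : ι k = i) : occPos ι i (s + 1) ≤ k :=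
  Nat.sInf_le ⟨h, hk⟩

theorem eq_occPos_succ (h : occPos ι i s < k) (h' : k < occPos ι i (s + 2)) (hk : ι k = i) :
    k = occPos ι i (s + 1) :=
  (occPos_succ_le h hk).antisymm' <| not_lt.1 fun hlt => (occPos_succ_le hlt hk).not_gt h'

theorem kplus_occPos_succ (hi : ∃ᶠ k in Filter.atTop, ι k = i) (s : ℕ) :
    kplus ι (occPos ι i (s + 1)) = occPos ι i (s + 2) := by
  rw [kplus, apply_occPos_succ hi]
  rfl

theorem firstOcc_ne (hi : ∃ᶠ k in Filter.atTop, ι k = i) (hj : ∃ᶠ k in Filter.atTop, ι k = j)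
    (hij : i ≠ j) : firstOcc ι i ≠ firstOcc ι j := fun h =>
  hij <| (apply_occPos_succ hi 0).symm.trans <| (congrArg ι h).trans (apply_occPos_succ hj 0)

theorem pval_add_pval_swap (hi : ∃ᶠ k in Filter.atTop, ι k = i)
    (hj : ∃ᶠ k in Filter.atTop, ι k = j) (hij : i ≠ j) : pval ι i j + pval ι j i = 1 := by
  have hne := firstOcc_ne hi hj hij
  unfold pval
  split_ifs <;> omega

end Occurrences

/-- The letters `i` and `j` alternate in the subsequence of `ι` formed by their occurrences; this is
the condition that `Adapted` imposes on each pair of adjacent letters. -/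
def Alternates (ι : ℕ → ℕ) (i j : ℕ) : Prop :=
  ∀ k l, 1 ≤ k → k < l → (ι k = i ∨ ι k = j) → (ι l = i ∨ ι l = j) →
    (∀ m, k < m → m < l → ι m ≠ i ∧ ι m ≠ j) → ι k ≠ ι l

namespace Alternates

variable {ι : ℕ → ℕ} {i j : ℕ}

protected theorem symm (h : Alternates ι i j) : Alternates ι j i :=
  fun k l hk hkl hik hil hm => h k l hk hkl hik.symm hil.symm fun m h₁ h₂ => (hm m h₁ h₂).symm

theorem occPos_succ_lt (h : Alternates ι i j) (hi : ∃ᶠ k in Filter.atTop, ι k = i) {t u : ℕ}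
    (hlt : occPos ι j t < occPos ι i (u + 1)) : occPos ι j (t + 1) < occPos ι i (u + 2) := by
  by_contra! hle
  -- Occurrences `u + 1` and `u + 2` of `i` would be consecutive among the letters `i` and `j`.
  refine h _ _ (Nat.zero_lt_of_lt hlt) (occPos_lt_succ hi (u + 1))
    (.inl (apply_occPos_succ hi u)) (.inl (apply_occPos_succ hi (u + 1)))
    (fun m hm hm' => ⟨fun hmi => ?_, fun hmj => ?_⟩)
    ((apply_occPos_succ hi u).trans (apply_occPos_succ hi (u + 1)).symm)
  · exact (occPos_succ_le hm hmi).not_gt hm'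
  · exact (occPos_succ_le (hlt.trans hm) hmj).not_gt (hm'.trans_le hle)

theorem occPos_interlace (h : Alternates ι i j) (hi : ∃ᶠ k in Filter.atTop, ι k = i)
    (hj : ∃ᶠ k in Filter.atTop, ι k = j) (hij : i ≠ j) (m : ℕ) :
    occPos ι j (m + pval ι j i) < occPos ι i (m + 1) ∧
      occPos ι i (m + 1) < occPos ι j (m + pval ι j i + 1) := by
  induction m with
  | zero =>
    obtain hlt | hlt := (firstOcc_ne hi hj hij).lt_or_gt
    · rw [pval, if_neg hlt.not_gt]
      exact ⟨occPos_lt_succ hi 0, hlt⟩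
    · rw [pval, if_pos hlt]
      exact ⟨hlt, h.symm.occPos_succ_lt hj (occPos_lt_succ hj 0)⟩
  | succ m ih =>
    rw [Nat.add_right_comm m 1]
    exact ⟨h.occPos_succ_lt hi ih.1, h.symm.occPos_succ_lt hj ih.2⟩

theorem filter_Ioo_occPos (h : Alternates ι i j) (hi : ∃ᶠ k in Filter.atTop, ι k = i)
    (hj : ∃ᶠ k in Filter.atTop, ι k = j) (hij : i ≠ j) (m : ℕ) :
    (Finset.Ioo (occPos ι i (m + 1)) (occPos ι i (m + 2))).filter (ι · = j) =
      {occPos ι j (m + 1 + pval ι j i)} := by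
  obtain ⟨hm, hm'⟩ := h.occPos_interlace hi hj hij m
  obtain ⟨hs, hs'⟩ := h.occPos_interlace hi hj hij (m + 1)
  rw [Nat.add_right_comm m 1 (pval ι j i)] at hs hs' ⊢
  ext k
  simp only [Finset.mem_filter, Finset.mem_Ioo, Finset.mem_singleton]
  constructor
  · rintro ⟨⟨hk, hk'⟩, hkj⟩
    exact eq_occPos_succ (hm.trans hk) (hk'.trans hs') hkj
  · rintro rfl
    exact ⟨⟨hm', hs⟩, apply_occPos_succ hj _⟩

end Alternates

section Beta

variable {n : ℕ} {ι : ℕ → ℕ} {A : ℕ → ℕ → ℤ} {i j : ℕ}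

theorem Admissible.frequently_eq (hadm : Admissible n ι) (hi : 1 ≤ i) (hin : i ≤ n) :
    ∃ᶠ k in Filter.atTop, ι k = i :=
  Filter.frequently_atTop.2 (hadm.2.2 i hi hin)

theorem xsj_natCast {s : ℕ} (hs : 1 ≤ s) (hj : 1 ≤ j) (hjn : j ≤ n) :
    xsj ι n s j = xc (occPos ι j s) := by
  rw [xsj, if_pos ⟨by exact_mod_cast hs, hj, hjn⟩, Int.toNat_natCast]

theorem sum_Ioo_occPos_smul_xc (hadm : Admissible n ι) (hadap : Adapted n A ι) (hi : 1 ≤ i)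
    (hin : i ≤ n) (m : ℕ) :
    ∑ k ∈ Finset.Ioo (occPos ι i (m + 1)) (occPos ι i (m + 2)), (A i (ι k) : ℚ) • xc k =
      ∑ j ∈ (Finset.Icc 1 n).erase i, (A i j : ℚ) • xc (occPos ι j (m + 1 + pval ι j i)) := by
  have hletter : ∀ k ∈ Finset.Ioo (occPos ι i (m + 1)) (occPos ι i (m + 2)),
      ι k ∈ (Finset.Icc 1 n).erase i := by
    intro k hk
    obtain ⟨hk, hk'⟩ := Finset.mem_Ioo.1 hk
    exact Finset.mem_erase.2 ⟨fun h => (occPos_succ_le hk h).not_gt hk',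
      Finset.mem_Icc.2 (hadm.1 k (Nat.zero_lt_of_lt hk))⟩
  rw [← Finset.sum_fiberwise_of_maps_to hletter]
  refine Finset.sum_congr rfl fun j hj => ?_
  obtain ⟨hji, hj, hjn⟩ : j ≠ i ∧ 1 ≤ j ∧ j ≤ n := by
    simpa only [Finset.mem_erase, Finset.mem_Icc] using hj
  rw [Finset.sum_congr rfl fun k hk => by rw [(Finset.mem_filter.1 hk).2]]
  by_cases hA : A i j = 0
  · simp only [hA, Int.cast_zero, zero_smul, Finset.sum_const_zero]
  · have halt : Alternates ι i j := hadap i j hi hin hj hjn hji.symm hA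
    rw [halt.filter_Ioo_occPos (hadm.frequently_eq hi hin) (hadm.frequently_eq hj hjn) hji.symm,
      Finset.sum_singleton]

theorem betasj_eq (hadm : Admissible n ι) (hadap : Adapted n A ι) (hi : 1 ≤ i) (hin : i ≤ n)
    {m : ℤ} (hm : 1 ≤ m) :
    betasj A ι m i = xsj ι n m i + xsj ι n (m + 1) i +
      ∑ j ∈ (Finset.Icc 1 n).erase i, (A i j : ℚ) • xsj ι n (m + pval ι j i) j := by
  obtain ⟨q, rfl⟩ : ∃ q : ℕ, m = (q + 1 : ℕ) := ⟨(m - 1).toNat, by omega⟩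
  have hocc := hadm.frequently_eq hi hin
  have hsum : ∑ j ∈ (Finset.Icc 1 n).erase i, (A i j : ℚ) • xsj ι n ((q + 1 : ℕ) + pval ι j i) j =
      ∑ j ∈ (Finset.Icc 1 n).erase i, (A i j : ℚ) • xc (occPos ι j (q + 1 + pval ι j i)) := by
    refine Finset.sum_congr rfl fun j hj => ?_
    obtain ⟨hj, hjn⟩ := Finset.mem_Icc.1 (Finset.mem_of_mem_erase hj)
    rw [← Nat.cast_add, xsj_natCast (by omega) hj hjn]
  rw [hsum, ← Nat.cast_succ, xsj_natCast (by omega) hi hin, xsj_natCast (by omega) hi hin, betasj,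
    Int.toNat_natCast, beta, if_neg (Nat.ne_zero_of_lt (occPos_lt_succ hocc q)),
    kplus_occPos_succ hocc, apply_occPos_succ hocc, sum_Ioo_occPos_smul_xc hadm hadap hi hin]
  abel

end Beta

section TypeD

variable {n : ℕ} {ι : ℕ → ℕ} {i j : ℕ} {s : ℤ}

/-- The parent of the node `i` in the Dynkin diagram `D_n` regarded as a tree rooted at `1`, that
is, its unique smaller neighbour. The value at the root is `0`, matching `x_{s,0} = 0`. -/
def parentD (n i : ℕ) : ℕ := if i = n then n - 2 else i - 1

/-- The coordinate form `X_s(j) = x_{s+P(j),j}`, in terms of which the type D boxes and the forms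
`β_{s+P(j),j}` no longer involve `P`. -/
noncomputable def shiftedCoord (ι : ℕ → ℕ) (n : ℕ) (s : ℤ) (j : ℕ) : ℕ → ℚ :=
  xsj ι n (s + PD ι n j) j

theorem shiftedCoord_zero_right (ι : ℕ → ℕ) (n : ℕ) (s : ℤ) : shiftedCoord ι n s 0 = 0 := by
  simp [shiftedCoord, xsj]

theorem parentD_lt (hi : 1 ≤ i) : parentD n i < i := by
  unfold parentD
  split_ifs <;> omega

theorem cartanD_eq_ite (hi : 1 ≤ i) (hj : 1 ≤ j) (hij : i ≠ j) :
    cartanD n i j = if parentD n i = j ∨ parentD n j = i then -1 else 0 := by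
  unfold cartanD parentD
  split_ifs <;> omega

theorem PD_eq_PD_parentD_add (hin : i ≤ n) (hi : 1 ≤ parentD n i) :
    PD ι n i = PD ι n (parentD n i) + pval ι i (parentD n i) := by
  unfold parentD at hi ⊢
  split_ifs at hi ⊢ with h
  · subst h
    rw [PD, if_pos rfl, PD, if_neg (by omega), if_pos (by omega)]
  · obtain ⟨q, rfl⟩ : ∃ q, i = q + 1 := ⟨i - 1, by omega⟩
    rw [Nat.add_sub_cancel] at hi ⊢
    rw [PD, if_neg h, if_pos hin, PD, if_neg (by omega), if_pos (by omega),
      Finset.sum_Icc_succ_top (by omega), Nat.add_sub_cancel]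

theorem cartanD_smul_xsj (hadm : Admissible n ι) (hi : 1 ≤ i) (hin : i ≤ n) (hj : 1 ≤ j)
    (hjn : j ≤ n) (hij : i ≠ j) (s : ℤ) :
    (cartanD n i j : ℚ) • xsj ι n (s + PD ι n i + pval ι j i) j =
      -(if parentD n i = j then shiftedCoord ι n (s + 1) j else 0) -
        if parentD n j = i then shiftedCoord ι n s j else 0 := by
  rw [cartanD_eq_ite hi hj hij]
  by_cases hchild : parentD n j = i
  · have hne : parentD n i ≠ j := fun h => by
      have := parentD_lt (n := n) hi
      have := parentD_lt (n := n) hj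
      omega
    have hP : PD ι n j = PD ι n i + pval ι j i := by
      simpa only [hchild] using PD_eq_PD_parentD_add (ι := ι) hjn (hi.trans_eq hchild.symm)
    simp [hchild, hne, shiftedCoord, hP, add_assoc]
  by_cases hparent : parentD n i = j
  · have hP : PD ι n i = PD ι n j + pval ι i j := by
      simpa only [hparent] using PD_eq_PD_parentD_add (ι := ι) hin (hj.trans_eq hparent.symm)
    have hp := pval_add_pval_swap (hadm.frequently_eq hi hin) (hadm.frequently_eq hj hjn) hij
    have hshift : s + PD ι n i + pval ι j i = s + 1 + PD ι n j := by omega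
    simp [hchild, hparent, shiftedCoord, hshift]
  · simp [hchild, hparent]

theorem betasj_cartanD (hadm : Admissible n ι) (hadap : Adapted n (cartanD n) ι) (hi : 1 ≤ i)
    (hin : i ≤ n) (hs : 1 - (PD ι n i : ℤ) ≤ s) :
    betasj (cartanD n) ι (s + PD ι n i) i =
      shiftedCoord ι n s i + shiftedCoord ι n (s + 1) i - shiftedCoord ι n (s + 1) (parentD n i) -
        ∑ j ∈ (Finset.Icc 1 n).filter (parentD n · = i), shiftedCoord ι n s j := by
  have hlt := parentD_lt (n := n) hi
  have hparent : ∑ j ∈ (Finset.Icc 1 n).erase i,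
      (if parentD n i = j then shiftedCoord ι n (s + 1) j else 0) =
        shiftedCoord ι n (s + 1) (parentD n i) := by
    rw [Finset.sum_ite_eq, ite_eq_left_iff]
    intro hmem
    have hroot : parentD n i = 0 := by
      simp only [Finset.mem_erase, Finset.mem_Icc] at hmem
      omega
    rw [hroot, shiftedCoord_zero_right]
  have hchildren : ∑ j ∈ (Finset.Icc 1 n).erase i,
      (if parentD n j = i then shiftedCoord ι n s j else 0) =
        ∑ j ∈ (Finset.Icc 1 n).filter (parentD n · = i), shiftedCoord ι n s j := by
    rw [Finset.sum_filter, Finset.sum_erase]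
    exact if_neg hlt.ne
  rw [betasj_eq hadm hadap hi hin (by omega), Finset.sum_congr rfl fun j hj =>
      cartanD_smul_xsj hadm hi hin (Finset.mem_Icc.1 (Finset.mem_of_mem_erase hj)).1
        (Finset.mem_Icc.1 (Finset.mem_of_mem_erase hj)).2 (Finset.ne_of_mem_erase hj).symm s,
    Finset.sum_sub_distrib, Finset.sum_neg_distrib, hparent, hchildren, add_right_comm s]
  simp only [shiftedCoord]
  abel

theorem betasj_cartanD_of_le (hadm : Admissible n ι) (hadap : Adapted n (cartanD n) ι)
    (hi : 1 ≤ i) (hin : i ≤ n - 3) (hs : 1 - (PD ι n i : ℤ) ≤ s) :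
    betasj (cartanD n) ι (s + PD ι n i) i =
      shiftedCoord ι n s i + shiftedCoord ι n (s + 1) i - shiftedCoord ι n (s + 1) (i - 1) -
        shiftedCoord ι n s (i + 1) := by
  have hchildren : (Finset.Icc 1 n).filter (parentD n · = i) = {i + 1} := by
    ext j
    simp only [Finset.mem_filter, Finset.mem_Icc, Finset.mem_singleton]
    unfold parentD
    split_ifs <;> omega
  rw [betasj_cartanD hadm hadap hi (by omega) hs, hchildren, Finset.sum_singleton, parentD,
    if_neg (by omega)]

theorem betasj_cartanD_branch (hadm : Admissible n ι) (hadap : Adapted n (cartanD n) ι)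
    (hn : 3 ≤ n) (hs : 1 - (PD ι n (n - 2) : ℤ) ≤ s) :
    betasj (cartanD n) ι (s + PD ι n (n - 2)) (n - 2) =
      shiftedCoord ι n s (n - 2) + shiftedCoord ι n (s + 1) (n - 2) -
        shiftedCoord ι n (s + 1) (n - 3) - (shiftedCoord ι n s (n - 1) + shiftedCoord ι n s n) := by
  have hchildren : (Finset.Icc 1 n).filter (parentD n · = n - 2) = {n - 1, n} := by
    ext j
    simp only [Finset.mem_filter, Finset.mem_Icc, Finset.mem_insert, Finset.mem_singleton]
    unfold parentD
    split_ifs <;> omega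
  rw [betasj_cartanD hadm hadap (by omega) (by omega) hs, hchildren, Finset.sum_pair (by omega),
    parentD, if_neg (by omega), Nat.sub_sub]

theorem betasj_cartanD_leaf (hadm : Admissible n ι) (hadap : Adapted n (cartanD n) ι) (hi : 1 ≤ i)
    (hleaf : i = n - 1 ∨ i = n) (hs : 1 - (PD ι n i : ℤ) ≤ s) :
    betasj (cartanD n) ι (s + PD ι n i) i =
      shiftedCoord ι n s i + shiftedCoord ι n (s + 1) i - shiftedCoord ι n (s + 1) (n - 2) := by
  have hchildren : (Finset.Icc 1 n).filter (parentD n · = i) = ∅ := by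
    ext j
    simp only [Finset.mem_filter, Finset.mem_Icc, Finset.notMem_empty, iff_false]
    unfold parentD
    split_ifs <;> omega
  have hparent : parentD n i = n - 2 := by
    unfold parentD
    split_ifs <;> omega
  rw [betasj_cartanD hadm hadap hi (by omega) hs, hchildren, Finset.sum_empty, sub_zero, hparent]

end TypeD

section Boxes

variable (ι : ℕ → ℕ) {n : ℕ} (s : ℤ) {j : ℕ}

theorem boxD_zero : boxD ι n s 0 = shiftedCoord ι n s n := by
  rw [boxD, if_pos rfl, shiftedCoord]

theorem boxD_of_le (hj : 1 ≤ j) (hjn : j ≤ n - 2) :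
    boxD ι n s j = shiftedCoord ι n s j - shiftedCoord ι n (s + 1) (j - 1) := by
  rw [boxD, if_neg (by omega), if_pos hjn, add_right_comm]
  rfl

theorem boxD_sub_one (hn : 2 ≤ n) : boxD ι n s (n - 1) =
    shiftedCoord ι n s (n - 1) + shiftedCoord ι n s n - shiftedCoord ι n (s + 1) (n - 2) := by
  rw [boxD, if_neg (by omega), if_neg (by omega), if_pos rfl, add_right_comm]
  rfl

theorem boxD_self (hn : 1 ≤ n) :
    boxD ι n s n = shiftedCoord ι n s n - shiftedCoord ι n (s + 1) (n - 1) := by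
  rw [boxD, if_neg (by omega), if_neg (by omega), if_neg (by omega), if_pos rfl, add_right_comm]
  rfl

theorem boxD_add_one :
    boxD ι n s (n + 1) = shiftedCoord ι n s (n - 1) - shiftedCoord ι n (s + 1) n := by
  rw [boxD, if_neg (by omega), if_neg (by omega), if_neg (by omega), if_neg (by omega), if_pos rfl,
    add_right_comm]
  rfl

theorem boxD_add_two : boxD ι n s (n + 2) =
    shiftedCoord ι n (s + 1) (n - 2) - shiftedCoord ι n (s + 1) (n - 1) -
      shiftedCoord ι n (s + 1) n := by
  simp only [boxD, shiftedCoord, add_right_comm s 1]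
  rw [if_neg (by omega), if_neg (by omega), if_neg (by omega), if_neg (by omega),
    if_neg (by omega), if_pos trivial]

theorem boxD_bar_of_le (hj : 1 ≤ j) (hjn : j ≤ n - 2) : boxD ι n s (2 * n + 1 - j) =
    shiftedCoord ι n (s + n - j) (j - 1) - shiftedCoord ι n (s + n - j) j := by
  have hpred : 2 * n - (2 * n + 1 - j) = j - 1 := by omega
  have hself : 2 * n + 1 - (2 * n + 1 - j) = j := by omega
  have hshift (a : ℤ) : s + a + n - j = s + n - j + a := by ring
  rw [boxD, if_neg (by omega), if_neg (by omega), if_neg (by omega), if_neg (by omega),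
    if_neg (by omega), if_neg (by omega), hpred, hself, hshift, hshift]
  rfl

end Boxes

section Relations

variable {n : ℕ} {ι : ℕ → ℕ} {j : ℕ} {s : ℤ}

theorem boxD_succ_eq_sub_betasj (hadm : Admissible n ι) (hadap : Adapted n (cartanD n) ι)
    (hj : 1 ≤ j) (hjn : j ≤ n - 1) (hs : 1 - (PD ι n j : ℤ) ≤ s) :
    boxD ι n s (j + 1) = boxD ι n s j - betasj (cartanD n) ι (s + PD ι n j) j := by
  obtain hlow | rfl | rfl : j ≤ n - 3 ∨ j = n - 2 ∨ j = n - 1 := by omega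
  · rw [boxD_of_le ι s (by omega) (by omega), boxD_of_le ι s hj (by omega),
      betasj_cartanD_of_le hadm hadap hj hlow hs, Nat.add_sub_cancel]
    abel
  · have hsucc : n - 2 + 1 = n - 1 := by omega
    rw [hsucc, boxD_sub_one ι s (by omega), boxD_of_le ι s hj le_rfl,
      betasj_cartanD_branch hadm hadap (by omega) hs, Nat.sub_sub]
    abel
  · have hsucc : n - 1 + 1 = n := by omega
    rw [hsucc, boxD_self ι s (by omega), boxD_sub_one ι s (by omega),
      betasj_cartanD_leaf hadm hadap hj (.inl rfl) hs]
    abel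

theorem boxD_add_one_eq_sub_betasj (hadm : Admissible n ι) (hadap : Adapted n (cartanD n) ι)
    (hn : 2 ≤ n) (hs : 1 - (PD ι n n : ℤ) ≤ s) :
    boxD ι n s (n + 1) = boxD ι n s (n - 1) - betasj (cartanD n) ι (s + PD ι n n) n := by
  rw [boxD_add_one, boxD_sub_one ι s hn, betasj_cartanD_leaf hadm hadap (by omega) (.inr rfl) hs]
  abel

theorem boxD_add_two_eq_sub_betasj (hadm : Admissible n ι) (hadap : Adapted n (cartanD n) ι)
    (hn : 1 ≤ n) (hs : 1 - (PD ι n n : ℤ) ≤ s) :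
    boxD ι n s (n + 2) = boxD ι n s n - betasj (cartanD n) ι (s + PD ι n n) n := by
  rw [boxD_add_two, boxD_self ι s hn, betasj_cartanD_leaf hadm hadap hn (.inr rfl) hs]
  abel

theorem boxD_bar_eq_sub_betasj (hadm : Admissible n ι) (hadap : Adapted n (cartanD n) ι)
    (hj : 1 ≤ j) (hjn : j ≤ n - 1) (hs : 1 - (PD ι n j : ℤ) ≤ s + n - (j + 1)) :
    boxD ι n s (2 * n + 1 - j) =
      boxD ι n s (2 * n - j) - betasj (cartanD n) ι (s + n - (j + 1) + PD ι n j) j := by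
  have hbar : 2 * n - j = 2 * n + 1 - (j + 1) := by omega
  have hshift : s + n - j = s + n - (j + 1) + 1 := by ring
  obtain hlow | rfl | rfl : j ≤ n - 3 ∨ j = n - 2 ∨ j = n - 1 := by omega
  · rw [hbar, boxD_bar_of_le ι s hj (by omega), boxD_bar_of_le ι s (by omega) (by omega),
      betasj_cartanD_of_le hadm hadap hj hlow hs, hshift, Nat.add_sub_cancel, Nat.cast_succ]
    abel
  · have hcode : 2 * n - (n - 2) = n + 2 := by omega
    have hone : s + n - ((n - 2 : ℕ) + 1) = s + 1 := by omega
    rw [hone] at hs hshift ⊢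
    rw [hcode, boxD_add_two, boxD_bar_of_le ι s hj le_rfl, hshift,
      betasj_cartanD_branch hadm hadap (by omega) hs, Nat.sub_sub]
    abel
  · have hcode : 2 * n - (n - 1) = n + 1 := by omega
    have hcode' : 2 * n + 1 - (n - 1) = n + 2 := by omega
    have hzero : s + n - ((n - 1 : ℕ) + 1) = s := by omega
    rw [hzero] at hs ⊢
    rw [hcode, hcode', boxD_add_one, boxD_add_two,
      betasj_cartanD_leaf hadm hadap hj (.inl rfl) hs]
    abel

theorem boxD_zero_add_add_eq_sub_betasj (hadm : Admissible n ι)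
    (hadap : Adapted n (cartanD n) ι) (hn : 1 ≤ n) (hs : 1 - (PD ι n n : ℤ) ≤ s) :
    boxD ι n (s + 2) 0 + boxD ι n (s + 1) (n + 1) + boxD ι n s (n + 2) =
      boxD ι n s 0 - betasj (cartanD n) ι (s + PD ι n n) n := by
  have hshift : s + 1 + 1 = s + 2 := by ring
  rw [boxD_zero, boxD_zero, boxD_add_one, boxD_add_two, hshift,
    betasj_cartanD_leaf hadm hadap hn (.inr rfl) hs]
  abel

end Relations

/-- Lemma 3.3 (iv): the type D box relations (barred entries `j̄` are encoded as `2n+1-j`,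
so `n̄ = n+1` and `ovl(n-1) = n+2`, and `ovl(n+1)` is encoded as `0`). -/
theorem boxD_rel (n : ℕ) (hn : 4 ≤ n) (ι : ℕ → ℕ)
    (hadm : Admissible n ι) (hadap : Adapted n (cartanD n) ι) :
    (∀ (j : ℕ) (s : ℤ), 1 ≤ j → j ≤ n - 1 → 1 - (PD ι n j : ℤ) ≤ s →
      boxD ι n s (j + 1) =
        boxD ι n s j - betasj (cartanD n) ι (s + (PD ι n j : ℤ)) j) ∧
    (∀ s : ℤ, 1 - (PD ι n n : ℤ) ≤ s →
      boxD ι n s (n + 1) =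
        boxD ι n s (n - 1) - betasj (cartanD n) ι (s + (PD ι n n : ℤ)) n) ∧
    (∀ s : ℤ, 1 - (PD ι n n : ℤ) ≤ s →
      boxD ι n s (n + 2) =
        boxD ι n s n - betasj (cartanD n) ι (s + (PD ι n n : ℤ)) n) ∧
    (∀ (j : ℕ) (s : ℤ), 2 ≤ j → j ≤ n →
        1 + (j : ℤ) - (PD ι n (j - 1) : ℤ) - (n : ℤ) ≤ s →
      boxD ι n s (2 * n + 2 - j) =
        boxD ι n s (2 * n + 1 - j)
          - betasj (cartanD n) ι
              (s + (PD ι n (j - 1) : ℤ) + (n : ℤ) - (j : ℤ)) (j - 1)) ∧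
    (∀ l : ℤ, 1 - (PD ι n n : ℤ) ≤ l →
      boxD ι n (l + 2) 0 + boxD ι n (l + 1) (n + 1) + boxD ι n l (n + 2) =
        boxD ι n l 0 - betasj (cartanD n) ι (l + (PD ι n n : ℤ)) n) := by
  refine ⟨fun j s hj hjn hs => boxD_succ_eq_sub_betasj hadm hadap hj hjn hs,
    fun s hs => boxD_add_one_eq_sub_betasj hadm hadap (by omega) hs,
    fun s hs => boxD_add_two_eq_sub_betasj hadm hadap (by omega) hs, fun j s hj hjn hs => ?_,
    fun l hl => boxD_zero_add_add_eq_sub_betasj hadm hadap (by omega) hl⟩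
  obtain ⟨i, rfl⟩ : ∃ i, j = i + 1 := ⟨j - 1, by omega⟩
  rw [Nat.add_sub_cancel] at hs ⊢
  have hcode : 2 * n + 2 - (i + 1) = 2 * n + 1 - i := by omega
  have hcode' : 2 * n + 1 - (i + 1) = 2 * n - i := by omega
  have hshift : s + PD ι n i + n - (i + 1 : ℕ) = s + n - (i + 1) + PD ι n i := by push_cast; ring
  rw [hcode, hcode', hshift]
  exact boxD_bar_eq_sub_betasj hadm hadap (by omega) (by omega) (by omega)
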